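/- Assume θ < -1, and b ≥ 0, c ≥ 0 on Ω. Let Ψ ∈ C²(Ω) ∩ C¹(cl(Ω)) be a classical solution of (★) with Ψ ≥ 0 on cl(Ω) and with boundary data g satisfying g > 0 on ∂Ω. Set ν := (sup_{∂Ω} g)^{-(1+θ)} > 0. Let Ψ̲ ∈ C²(Ω) ∩ C¹(cl(Ω)) satisfy the linear equation -∇·(a∇Ψ̲) + (b + cν)Ψ̲ = 0 pointwise in Ω with Ψ̲ = g on ∂Ω, and suppose 0 ≤ Ψ̲ ≤ sup_{∂Ω} g on cl(Ω). Then Ψ ≥ Ψ̲ everywhere in Ω. -/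

import Mathlib

/-!
Since `0 ≤ Ψlow ≤ gbar` and `-(1 + θ) > 0`, one has `sTheta θ Ψlow ≤ ν Ψlow`, so `Ψlow` is a
subsolution of the equation (★), `∇·(a∇Ψ) = b Ψ + c sTheta θ Ψ`. As `z ↦ b z + c sTheta θ z` is
nondecreasing, `w = Ψlow - Ψ` satisfies `∇·(a∇w) ≥ 0` wherever `w > 0`, and `w ≤ 0` on `∂Ω`, so a
weak maximum principle gives `w ≤ 0`.

For the maximum principle, suppose `w x₀ > 0` and let `K` be the set where `w ≥ w x₀ / 2`. It is
compact and contained in `Ω`, so some `h y = exp (γ yⱼ)` has `∇·(a∇h) > 0` on `K`: the term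
`γ² a` beats `γ ∂ⱼa` for large `γ`. For small `ε > 0` the maximum of `w + ε h` is attained in `K`,
where `∇·(a∇(w + ε h))` is positive, although it is nonpositive at an interior maximum.
-/

open Real Set MeasureTheory Filter Topology

/-- Divergence-form operator `∇·(a∇u)(x) = ∑ i ∂_i (a ∂_i u)(x)`. -/
noncomputable def divA {d : ℕ} (a u : EuclideanSpace ℝ (Fin d) → ℝ)
    (x : EuclideanSpace ℝ (Fin d)) : ℝ :=
  ∑ i : Fin d,
    fderiv ℝ (fun y => a y * fderiv ℝ u y (EuclideanSpace.single i (1 : ℝ))) x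
      (EuclideanSpace.single i (1 : ℝ))

/-- Squared Euclidean norm of the gradient `|∇u|²(x)`. -/
noncomputable def gradSq {d : ℕ} (u : EuclideanSpace ℝ (Fin d) → ℝ)
    (x : EuclideanSpace ℝ (Fin d)) : ℝ :=
  ∑ i : Fin d, (fderiv ℝ u x (EuclideanSpace.single i (1 : ℝ))) ^ 2


/-- `s_θ(z) = sign(z)·|z|^{-θ}`, so `s_θ(z) = z^{-θ}` for `z > 0` and `s_θ(0) = 0`. -/
noncomputable def sTheta (θ z : ℝ) : ℝ := Real.sign z * |z| ^ (-θ)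

section LocalMax

/-- At a local maximum a positive second derivative would also make the point a local minimum, so
the function would be locally constant. -/
lemma deriv_deriv_nonpos_of_isLocalMax {f : ℝ → ℝ} {t : ℝ} (hf : ContinuousAt f t)
    (hmax : IsLocalMax f t) : deriv (deriv f) t ≤ 0 := by
  by_contra! hpos
  have hmin : IsLocalMin f t := isLocalMin_of_deriv_deriv_pos hpos hmax.deriv_eq_zero hf
  have hconst : f =ᶠ[𝓝 t] fun _ => f t := by
    filter_upwards [hmax, hmin] with s hle hge using le_antisymm hle hge
  have hzero : deriv (deriv f) t = 0 := by simp [hconst.deriv.deriv_eq]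
  exact hpos.ne' hzero

variable {E F : Type*} [NormedAddCommGroup E] [NormedSpace ℝ E] [NormedAddCommGroup F]
  [NormedSpace ℝ F]

lemma hasDerivAt_comp_add_smul {f : E → F} {x e : E} {t : ℝ}
    (hf : DifferentiableAt ℝ f (x + t • e)) :
    HasDerivAt (fun s : ℝ => f (x + s • e)) (fderiv ℝ f (x + t • e) e) t := by
  have hline : HasDerivAt (fun s : ℝ => x + s • e) e t := by
    simpa using ((hasDerivAt_id t).smul_const e).const_add x
  exact hf.hasFDerivAt.comp_hasDerivAt t hline

lemma differentiableAt_fderiv_apply {u : E → F} {x : E} (hu : ContDiffAt ℝ 2 u x) (e : E) :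
    DifferentiableAt ℝ (fun y => fderiv ℝ u y e) x :=
  ((hu.fderiv_right (m := 1) (by norm_num)).differentiableAt (by norm_num)).clm_apply
    (differentiableAt_const e)

lemma eventually_differentiableAt {u : E → F} {x : E} (hu : ContDiffAt ℝ 1 u x) :
    ∀ᶠ y in 𝓝 x, DifferentiableAt ℝ u y :=
  (hu.eventually (by simp)).mono fun _ hy => hy.differentiableAt one_ne_zero

lemma fderiv_fderiv_apply_nonpos_of_isLocalMax {u : E → ℝ} {x : E} (hu : ContDiffAt ℝ 2 u x)
    (hmax : IsLocalMax u x) (e : E) : fderiv ℝ (fun y => fderiv ℝ u y e) x e ≤ 0 := by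
  have hline : Tendsto (fun t : ℝ => x + t • e) (𝓝 0) (𝓝 x) :=
    Continuous.tendsto' (by fun_prop) _ _ (by simp)
  have hderiv : deriv (fun t : ℝ => u (x + t • e)) =ᶠ[𝓝 0] fun t => fderiv ℝ u (x + t • e) e :=
    (hline.eventually (eventually_differentiableAt (hu.of_le one_le_two))).mono
      fun t ht => (hasDerivAt_comp_add_smul ht).deriv
  have hderiv₂ : deriv (deriv fun t : ℝ => u (x + t • e)) 0 =
      fderiv ℝ (fun y => fderiv ℝ u y e) x e := by
    rw [hderiv.deriv_eq, (hasDerivAt_comp_add_smul (f := fun y => fderiv ℝ u y e) (by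
      simpa using differentiableAt_fderiv_apply hu e)).deriv, zero_smul, add_zero]
  have hcont : ContinuousAt (fun t : ℝ => u (x + t • e)) 0 :=
    ContinuousAt.comp (by simpa using hu.continuousAt) (by fun_prop)
  have hmaxline : IsLocalMax (fun t : ℝ => u (x + t • e)) 0 := by
    simpa [IsLocalMax, IsMaxFilter] using hline.eventually hmax
  exact hderiv₂ ▸ deriv_deriv_nonpos_of_isLocalMax hcont hmaxline

end LocalMax

section DivA

variable {d : ℕ} {a u v : EuclideanSpace ℝ (Fin d) → ℝ} {x : EuclideanSpace ℝ (Fin d)}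

lemma divA_const_smul (a u : EuclideanSpace ℝ (Fin d) → ℝ) (k : ℝ)
    (x : EuclideanSpace ℝ (Fin d)) : divA a (k • u) x = k * divA a u x := by
  unfold divA
  rw [Finset.mul_sum]
  refine Finset.sum_congr rfl fun i _ => ?_
  have hflux : (fun y => a y * fderiv ℝ (k • u) y (EuclideanSpace.single i 1)) =
      k • fun y => a y * fderiv ℝ u y (EuclideanSpace.single i 1) := by
    funext y
    simp [fderiv_const_smul_field, mul_left_comm]
  rw [hflux, fderiv_const_smul_field, Pi.smul_apply, smul_apply, smul_eq_mul]

lemma divA_add (ha : DifferentiableAt ℝ a x) (hu : ContDiffAt ℝ 2 u x)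
    (hv : ContDiffAt ℝ 2 v x) : divA a (u + v) x = divA a u x + divA a v x := by
  unfold divA
  rw [← Finset.sum_add_distrib]
  refine Finset.sum_congr rfl fun i _ => ?_
  set e := EuclideanSpace.single i (1 : ℝ)
  have hflux : (fun y => a y * fderiv ℝ (u + v) y e) =ᶠ[𝓝 x]
      (fun y => a y * fderiv ℝ u y e) + fun y => a y * fderiv ℝ v y e := by
    filter_upwards [eventually_differentiableAt (hu.of_le one_le_two),
      eventually_differentiableAt (hv.of_le one_le_two)] with y hyu hyv
    simp [fderiv_add hyu hyv, mul_add]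
  rw [hflux.fderiv_eq, fderiv_add (ha.fun_mul (differentiableAt_fderiv_apply hu e))
    (ha.fun_mul (differentiableAt_fderiv_apply hv e)), add_apply]

lemma divA_sub (ha : DifferentiableAt ℝ a x) (hu : ContDiffAt ℝ 2 u x)
    (hv : ContDiffAt ℝ 2 v x) : divA a (u - v) x = divA a u x - divA a v x := by
  have hsub : u - v = u + (-1 : ℝ) • v := by simp [sub_eq_add_neg]
  have hneg : ContDiffAt ℝ 2 ((-1 : ℝ) • v) x := hv.const_smul (-1 : ℝ)
  rw [hsub, divA_add ha hu hneg, divA_const_smul]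
  ring

lemma divA_nonpos_of_isLocalMax (ha : DifferentiableAt ℝ a x) (ha_nonneg : 0 ≤ a x)
    (hu : ContDiffAt ℝ 2 u x) (hmax : IsLocalMax u x) : divA a u x ≤ 0 := by
  refine Finset.sum_nonpos fun i _ => ?_
  rw [fderiv_fun_mul ha (differentiableAt_fderiv_apply hu _)]
  simpa [hmax.fderiv_eq_zero] using mul_nonpos_of_nonneg_of_nonpos ha_nonneg
    (fderiv_fderiv_apply_nonpos_of_isLocalMax hu hmax (EuclideanSpace.single i 1))

lemma divA_exp_clm (ha : DifferentiableAt ℝ a x) (ℓ : EuclideanSpace ℝ (Fin d) →L[ℝ] ℝ) :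
    divA a (fun y => Real.exp (ℓ y)) x =
      Real.exp (ℓ x) * ∑ i, ℓ (EuclideanSpace.single i 1) *
        (a x * ℓ (EuclideanSpace.single i 1) + fderiv ℝ a x (EuclideanSpace.single i 1)) := by
  have hexp (y : EuclideanSpace ℝ (Fin d)) :
      HasFDerivAt (fun y => Real.exp (ℓ y)) (Real.exp (ℓ y) • ℓ) y := ℓ.hasFDerivAt.exp
  unfold divA
  rw [Finset.mul_sum]
  refine Finset.sum_congr rfl fun i _ => ?_
  simp only [(hexp _).fderiv, smul_apply, smul_eq_mul]
  rw [(ha.hasFDerivAt.fun_mul ((hexp x).mul_const _)).fderiv]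
  simp only [add_apply, smul_apply, smul_eq_mul]
  ring

/-- The witness is `exp (γ xⱼ)`, for which `∇·(a∇h) = γ h (γ a + ∂ⱼa)`, with `γ` above the
supremum of `|∂ⱼa| / a` on `K`. -/
lemma exists_contDiff_divA_pos_of_isCompact (hd : 1 ≤ d) {Ω K : Set (EuclideanSpace ℝ (Fin d))}
    (hΩ : IsOpen Ω) (hK : IsCompact K) (hKΩ : K ⊆ Ω) (ha : ContDiffOn ℝ 1 a Ω)
    (ha_pos : ∀ x ∈ K, 0 < a x) :
    ∃ h : EuclideanSpace ℝ (Fin d) → ℝ, ContDiff ℝ 2 h ∧ ∀ x ∈ K, 0 < divA a h x := by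
  let j : Fin d := ⟨0, hd⟩
  have hcont : ContinuousOn
      (fun x => fderiv ℝ a x (EuclideanSpace.single j 1) / a x) K :=
    (((ha.continuousOn_fderiv_of_isOpen hΩ le_rfl).mono hKΩ).clm_apply continuousOn_const).div
      (ha.continuousOn.mono hKΩ) fun x hx => (ha_pos x hx).ne'
  obtain ⟨C, hC⟩ := hK.exists_bound_of_continuousOn hcont
  let γ : ℝ := |C| + 1
  let ℓ : EuclideanSpace ℝ (Fin d) →L[ℝ] ℝ := γ • EuclideanSpace.proj j
  refine ⟨fun x => Real.exp (ℓ x), ℓ.contDiff.exp, fun x hx => ?_⟩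
  have hax := ha_pos x hx
  have ha_diff : DifferentiableAt ℝ a x :=
    (ha.contDiffAt (hΩ.mem_nhds (hKΩ hx))).differentiableAt (by norm_num)
  have hratio : 0 < γ + fderiv ℝ a x (EuclideanSpace.single j 1) / a x := by
    linarith [neg_le_of_abs_le (hC x hx), le_abs_self C]
  have hfactor : 0 < γ * (a x * γ + fderiv ℝ a x (EuclideanSpace.single j 1)) := by
    have hγ : 0 < γ := by positivity
    calc 0 < γ * (a x * (γ + fderiv ℝ a x (EuclideanSpace.single j 1) / a x)) := by positivity
      _ = γ * (a x * γ + fderiv ℝ a x (EuclideanSpace.single j 1)) := by field_simp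
  rw [divA_exp_clm ha_diff, Finset.sum_eq_single j (fun i _ hij => by simp [ℓ, hij.symm])
    (by simp)]
  simpa [ℓ] using mul_pos (Real.exp_pos (ℓ x)) hfactor

end DivA

section MaximumPrinciple

lemma exists_isLocalMax_add_smul {X : Type*} [TopologicalSpace X] {Ω : Set X} (hΩ : IsOpen Ω)
    (hΩc : IsCompact (closure Ω)) {w h : X → ℝ} (hw : ContinuousOn w (closure Ω))
    (hh : ContinuousOn h (closure Ω)) {δ : ℝ} (hbd : ∀ x ∈ frontier Ω, w x ≤ δ) {x₀ : X}
    (hx₀ : x₀ ∈ Ω) (hδ : δ < w x₀) :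
    ∃ ε > (0 : ℝ), ∃ x ∈ Ω, δ < w x ∧ IsLocalMax (w + ε • h) x := by
  obtain ⟨M, hM⟩ := hΩc.exists_bound_of_continuousOn hh
  obtain ⟨ε, hε, hεM⟩ := exists_pos_mul_lt (sub_pos.2 hδ) (2 * M)
  obtain ⟨x, hx, hmax⟩ := hΩc.exists_isMaxOn ⟨x₀, subset_closure hx₀⟩ (hw.add (hh.const_smul ε))
  have hδx : δ < w x := by
    have hle : w x₀ + ε * h x₀ ≤ w x + ε * h x := hmax (subset_closure hx₀)
    have hosc : h x - h x₀ ≤ 2 * M := by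
      linarith [le_of_abs_le (hM x hx), neg_le_of_abs_le (hM x₀ (subset_closure hx₀))]
    linarith [mul_le_mul_of_nonneg_right hosc hε.le]
  have hxΩ : x ∈ Ω := by
    by_contra hx'
    exact hδx.not_ge (hbd x (hΩ.frontier_eq ▸ ⟨hx, hx'⟩))
  exact ⟨ε, hε, x, hxΩ, hδx, hmax.isLocalMax (mem_of_superset (hΩ.mem_nhds hxΩ) subset_closure)⟩

variable {d : ℕ} {Ω : Set (EuclideanSpace ℝ (Fin d))} {a : EuclideanSpace ℝ (Fin d) → ℝ}

theorem nonpos_of_divA_nonneg_of_nonpos_frontier (hd : 1 ≤ d) (hΩ : IsOpen Ω)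
    (hΩb : Bornology.IsBounded Ω) (ha : ContDiffOn ℝ 1 a Ω) (ha_pos : ∀ x ∈ Ω, 0 < a x)
    {w : EuclideanSpace ℝ (Fin d) → ℝ} (hw : ContDiffOn ℝ 2 w Ω)
    (hwc : ContinuousOn w (closure Ω)) (hbd : ∀ x ∈ frontier Ω, w x ≤ 0)
    (hdiv : ∀ x ∈ Ω, 0 < w x → 0 ≤ divA a w x) : ∀ x ∈ Ω, w x ≤ 0 := by
  by_contra! ⟨x₀, hx₀, hwx₀⟩
  have hΩc : IsCompact (closure Ω) := hΩb.isCompact_closure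
  let K := closure Ω ∩ w ⁻¹' Ici (w x₀ / 2)
  have hK : IsCompact K := hΩc.of_isClosed_subset
    (hwc.preimage_isClosed_of_isClosed isClosed_closure isClosed_Ici) inter_subset_left
  have hKΩ : K ⊆ Ω := fun x ⟨hx, (hwx : w x₀ / 2 ≤ w x)⟩ => by
    by_contra hx'
    linarith [hbd x (hΩ.frontier_eq ▸ ⟨hx, hx'⟩)]
  obtain ⟨h, hh, hdivh⟩ := exists_contDiff_divA_pos_of_isCompact hd hΩ hK hKΩ ha
    fun x hx => ha_pos x (hKΩ hx)
  obtain ⟨ε, hε, x, hx, hwx, hmax⟩ := exists_isLocalMax_add_smul hΩ hΩc hwc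
    hh.continuous.continuousOn (fun x hx => (hbd x hx).trans (half_pos hwx₀).le) hx₀
    (half_lt_self hwx₀)
  have hΩx : Ω ∈ 𝓝 x := hΩ.mem_nhds hx
  have ha_diff : DifferentiableAt ℝ a x := (ha.contDiffAt hΩx).differentiableAt (by norm_num)
  have hεh : ContDiffAt ℝ 2 (ε • h) x := hh.contDiffAt.const_smul ε
  have hle : divA a (w + ε • h) x ≤ 0 :=
    divA_nonpos_of_isLocalMax ha_diff (ha_pos x hx).le ((hw.contDiffAt hΩx).add hεh) hmax
  rw [divA_add ha_diff (hw.contDiffAt hΩx) hεh, divA_const_smul] at hle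
  have hdivw : 0 ≤ divA a w x := hdiv x hx ((half_pos hwx₀).trans hwx)
  linarith [mul_pos hε (hdivh x ⟨subset_closure hx, hwx.le⟩)]

theorem le_of_divA_le_of_le_frontier (hd : 1 ≤ d) (hΩ : IsOpen Ω)
    (hΩb : Bornology.IsBounded Ω) (ha : ContDiffOn ℝ 1 a Ω) (ha_pos : ∀ x ∈ Ω, 0 < a x)
    {u v : EuclideanSpace ℝ (Fin d) → ℝ} (hu : ContDiffOn ℝ 2 u Ω)
    (huc : ContinuousOn u (closure Ω)) (hv : ContDiffOn ℝ 2 v Ω)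
    (hvc : ContinuousOn v (closure Ω)) (hbd : ∀ x ∈ frontier Ω, u x ≤ v x)
    (hdiv : ∀ x ∈ Ω, v x < u x → divA a v x ≤ divA a u x) : ∀ x ∈ Ω, u x ≤ v x := by
  have hsub : ∀ x ∈ Ω, (u - v) x ≤ 0 := by
    refine nonpos_of_divA_nonneg_of_nonpos_frontier hd hΩ hΩb ha ha_pos (hu.sub hv)
      (huc.sub hvc) (fun x hx => sub_nonpos.2 (hbd x hx)) fun x hx hlt => ?_
    have hΩx : Ω ∈ 𝓝 x := hΩ.mem_nhds hx
    rw [divA_sub ((ha.contDiffAt hΩx).differentiableAt (by norm_num)) (hu.contDiffAt hΩx)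
      (hv.contDiffAt hΩx)]
    exact sub_nonneg.2 (hdiv x hx (sub_pos.1 hlt))
  exact fun x hx => sub_nonpos.1 (hsub x hx)

end MaximumPrinciple

section Nonlinearity

lemma sTheta_of_pos (θ : ℝ) {z : ℝ} (hz : 0 < z) : sTheta θ z = z ^ (-θ) := by
  rw [sTheta, Real.sign_of_pos hz, abs_of_pos hz, one_mul]

lemma sTheta_zero (θ : ℝ) : sTheta θ 0 = 0 := by
  rw [sTheta, Real.sign_zero, zero_mul]

lemma sTheta_neg (θ z : ℝ) : sTheta θ (-z) = -sTheta θ z := by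
  rw [sTheta, sTheta, Real.sign_neg, abs_neg, neg_mul]

lemma monotone_sTheta {θ : ℝ} (hθ : θ ≤ 0) : Monotone (sTheta θ) := by
  refine monotone_of_odd_of_monotoneOn_nonneg (sTheta_neg θ) fun y (hy : 0 ≤ y) z hz hyz => ?_
  rcases hy.eq_or_lt with rfl | hy
  · rcases hyz.eq_or_lt with rfl | hz
    · rfl
    · rw [sTheta_zero, sTheta_of_pos θ hz]
      positivity
  · rw [sTheta_of_pos θ hy, sTheta_of_pos θ (hy.trans_le hyz)]
    exact Real.rpow_le_rpow hy.le hyz (neg_nonneg.2 hθ)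

lemma sTheta_le_rpow_mul {θ z G : ℝ} (hθ : θ ≤ -1) (hz : 0 ≤ z) (hzG : z ≤ G) :
    sTheta θ z ≤ G ^ (-(1 + θ)) * z := by
  rcases hz.eq_or_lt with rfl | hz
  · rw [sTheta_zero, mul_zero]
  · calc sTheta θ z = z ^ (-(1 + θ) + 1) := by rw [sTheta_of_pos θ hz]; congr 1; ring
      _ = z ^ (-(1 + θ)) * z := Real.rpow_add_one hz.ne' _
      _ ≤ G ^ (-(1 + θ)) * z := by gcongr; linarith

end Nonlinearity

section SemilinearComparison

variable {d : ℕ} {Ω : Set (EuclideanSpace ℝ (Fin d))} {a b c : EuclideanSpace ℝ (Fin d) → ℝ}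
  {θ : ℝ} {u v : EuclideanSpace ℝ (Fin d) → ℝ}

/-- `u` is a classical subsolution in `Ω` of the semilinear equation (★),
`∇·(a∇u) = b u + c s_θ(u)`, for use in the comparison principle. Only the pointwise inequality is
recorded; the regularity of `u` is left to separate hypotheses. -/
def IsSubsolution (a b c : EuclideanSpace ℝ (Fin d) → ℝ) (θ : ℝ)
    (Ω : Set (EuclideanSpace ℝ (Fin d))) (u : EuclideanSpace ℝ (Fin d) → ℝ) : Prop :=
  ∀ x ∈ Ω, b x * u x + c x * sTheta θ (u x) ≤ divA a u x

/-- `v` is a classical supersolution in `Ω` of the semilinear equation (★), the upper side of the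
comparison principle, with the same convention on regularity as for `IsSubsolution`. -/
def IsSupersolution (a b c : EuclideanSpace ℝ (Fin d) → ℝ) (θ : ℝ)
    (Ω : Set (EuclideanSpace ℝ (Fin d))) (v : EuclideanSpace ℝ (Fin d) → ℝ) : Prop :=
  ∀ x ∈ Ω, divA a v x ≤ b x * v x + c x * sTheta θ (v x)

theorem IsSubsolution.le_of_isSupersolution (hd : 1 ≤ d) (hΩ : IsOpen Ω)
    (hΩb : Bornology.IsBounded Ω) (ha : ContDiffOn ℝ 1 a Ω) (ha_pos : ∀ x ∈ Ω, 0 < a x)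
    (hb : ∀ x ∈ Ω, 0 ≤ b x) (hc : ∀ x ∈ Ω, 0 ≤ c x) (hθ : θ ≤ 0)
    (hu : ContDiffOn ℝ 2 u Ω) (huc : ContinuousOn u (closure Ω))
    (hv : ContDiffOn ℝ 2 v Ω) (hvc : ContinuousOn v (closure Ω))
    (hbd : ∀ x ∈ frontier Ω, u x ≤ v x) (hsub : IsSubsolution a b c θ Ω u)
    (hsuper : IsSupersolution a b c θ Ω v) : ∀ x ∈ Ω, u x ≤ v x := by
  refine le_of_divA_le_of_le_frontier hd hΩ hΩb ha ha_pos hu huc hv hvc hbd fun x hx hlt => ?_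
  calc divA a v x ≤ b x * v x + c x * sTheta θ (v x) := hsuper x hx
    _ ≤ b x * u x + c x * sTheta θ (u x) :=
      add_le_add (mul_le_mul_of_nonneg_left hlt.le (hb x hx))
        (mul_le_mul_of_nonneg_left (monotone_sTheta hθ hlt.le) (hc x hx))
    _ ≤ divA a u x := hsub x hx

lemma isSubsolution_of_linear_le_divA (hθ : θ ≤ -1) (hc : ∀ x ∈ Ω, 0 ≤ c x) {G : ℝ}
    (hu : ∀ x ∈ Ω, u x ∈ Icc 0 G)
    (hlin : ∀ x ∈ Ω, (b x + c x * G ^ (-(1 + θ))) * u x ≤ divA a u x) :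
    IsSubsolution a b c θ Ω u := fun x hx =>
  calc b x * u x + c x * sTheta θ (u x)
      ≤ b x * u x + c x * (G ^ (-(1 + θ)) * u x) := by
        gcongr
        · exact hc x hx
        · exact sTheta_le_rpow_mul hθ (hu x hx).1 (hu x hx).2
    _ = (b x + c x * G ^ (-(1 + θ))) * u x := by ring
    _ ≤ divA a u x := hlin x hx

end SemilinearComparison

theorem stmt7_general {d : ℕ} (hd : 1 ≤ d) {Ω : Set (EuclideanSpace ℝ (Fin d))}
    (hΩo : IsOpen Ω) (hΩb : Bornology.IsBounded Ω)
    {a b c : EuclideanSpace ℝ (Fin d) → ℝ}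
    (ha : ContDiffOn ℝ 1 a Ω) (ha_pos : ∀ x ∈ Ω, 0 < a x) {θ : ℝ} (hθ : θ ≤ -1)
    (hb : ∀ x ∈ Ω, 0 ≤ b x) (hc : ∀ x ∈ Ω, 0 ≤ c x)
    {Ψ : EuclideanSpace ℝ (Fin d) → ℝ}
    (hΨ2 : ContDiffOn ℝ 2 Ψ Ω) (hΨc : ContinuousOn Ψ (closure Ω))
    (hΨ : IsSupersolution a b c θ Ω Ψ)
    {Ψlow : EuclideanSpace ℝ (Fin d) → ℝ}
    (hΨl2 : ContDiffOn ℝ 2 Ψlow Ω) (hΨlc : ContinuousOn Ψlow (closure Ω))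
    {gbar : ℝ} (hΨlbounds : ∀ x ∈ Ω, Ψlow x ∈ Icc 0 gbar)
    (hΨlow : ∀ x ∈ Ω, (b x + c x * gbar ^ (-(1 + θ))) * Ψlow x ≤ divA a Ψlow x)
    (hbd : ∀ x ∈ frontier Ω, Ψlow x ≤ Ψ x) :
    ∀ x ∈ Ω, Ψlow x ≤ Ψ x :=
  (isSubsolution_of_linear_le_divA hθ hc hΨlbounds hΨlow).le_of_isSupersolution hd hΩo hΩb ha
    ha_pos hb hc (by linarith) hΨl2 hΨlc hΨ2 hΨc hbd hΨ

theorem stmt7 {d : ℕ} (hd : 1 ≤ d) (Ω U : Set (EuclideanSpace ℝ (Fin d)))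
    (hΩo : IsOpen Ω) (hΩb : Bornology.IsBounded Ω)
    (hU : IsOpen U) (hUΩ : closure Ω ⊆ U)
    (a b c : EuclideanSpace ℝ (Fin d) → ℝ)
    (ha : ContDiffOn ℝ 1 a U) (a₀ : ℝ) (ha₀ : 0 < a₀) (halb : ∀ x ∈ Ω, a₀ ≤ a x)
    (hbcont : ContinuousOn b (closure Ω)) (hccont : ContinuousOn c (closure Ω))
    (θ : ℝ) (hθ : θ < -1)
    (hbnn : ∀ x ∈ Ω, 0 ≤ b x) (hcnn : ∀ x ∈ Ω, 0 ≤ c x)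
    (g : EuclideanSpace ℝ (Fin d) → ℝ) (hg : ∀ x ∈ frontier Ω, 0 < g x)
    (gbar : ℝ) (hgbar : IsLUB (g '' frontier Ω) gbar) (hgbarpos : 0 < gbar)
    (ν : ℝ) (hν : ν = gbar ^ (-(1 + θ)))
    (Ψ : EuclideanSpace ℝ (Fin d) → ℝ)
    (hΨ2 : ContDiffOn ℝ 2 Ψ Ω) (hΨ1 : ContDiffOn ℝ 1 Ψ (closure Ω))
    (hΨnn : ∀ x ∈ closure Ω, 0 ≤ Ψ x)
    (hΨeq : ∀ x ∈ Ω, divA a Ψ x = b x * Ψ x + c x * sTheta θ (Ψ x))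
    (hΨbd : ∀ x ∈ frontier Ω, Ψ x = g x)
    (Ψlow : EuclideanSpace ℝ (Fin d) → ℝ)
    (hΨl2 : ContDiffOn ℝ 2 Ψlow Ω) (hΨl1 : ContDiffOn ℝ 1 Ψlow (closure Ω))
    (hΨleq : ∀ x ∈ Ω, -divA a Ψlow x + (b x + c x * ν) * Ψlow x = 0)
    (hΨlbd : ∀ x ∈ frontier Ω, Ψlow x = g x)
    (hΨlbounds : ∀ x ∈ closure Ω, 0 ≤ Ψlow x ∧ Ψlow x ≤ gbar) :
    ∀ x ∈ Ω, Ψlow x ≤ Ψ x := by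
  subst hν
  exact stmt7_general hd hΩo hΩb (ha.mono (subset_closure.trans hUΩ))
    (fun x hx => ha₀.trans_le (halb x hx)) hθ.le hbnn hcnn hΨ2 hΨ1.continuousOn
    (fun x hx => (hΨeq x hx).le) hΨl2 hΨl1.continuousOn
    (fun x hx => hΨlbounds x (subset_closure hx)) (fun x hx => by linarith [hΨleq x hx])
    (fun x hx => by rw [hΨlbd x hx, hΨbd x hx])
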